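/- Let 𝖷, 𝖸, 𝖹 be finite sets, p a probability distribution on 𝖷 × 𝖸 × 𝖹 with p(z) > 0 for all z and p(x,y) > 0 on the support, and α a partition of 𝖷 with p(A) > 0 for every block. With the coarsened conditional p̂(z|x) := ∑_{x' ∈ A_x} p(x'|A_x) p(z|x'), the following inequalities hold: I(X→Z) := ∑_x p(x) ∑_z p̂(z|x) log(p̂(z|x)/p(z)) ≤ I(X;Z) := ∑_x p(x) ∑_z p(z|x) log(p(z|x)/p(z)), and I(Y→Z|X) := ∑_{x,y} p(x,y) ∑_z p(z|x,y) log(p(z|x,y)/p̂(z|x)) ≥ I(Y;Z|X) := ∑_{x,y} p(x,y) ∑_z p(z|x,y) log(p(z|x,y)/p(z|x)), with the convention 0·log 0 = 0. -/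

import Mathlib

open Finset

variable {X Y Z : Type*}

/-- Marginal `p(x)`. -/
def pX [Fintype Y] [Fintype Z] (p : X → Y → Z → ℝ) (x : X) : ℝ := ∑ y, ∑ z, p x y z

/-- Marginal `p(x,y)`. -/
def pXY [Fintype Z] (p : X → Y → Z → ℝ) (x : X) (y : Y) : ℝ := ∑ z, p x y z

/-- Marginal `p(z)`. -/
def pZ [Fintype X] [Fintype Y] (p : X → Y → Z → ℝ) (z : Z) : ℝ := ∑ x, ∑ y, p x y z

/-- Conditional `p(z|x,y) = p(x,y,z)/p(x,y)`. -/
noncomputable def pZXY [Fintype Z] (p : X → Y → Z → ℝ) (x : X) (y : Y) (z : Z) : ℝ :=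
  p x y z / pXY p x y

/-- Conditional `p(z|x) = ∑_y p(y|x) p(z|x,y)`. -/
noncomputable def pZX [Fintype Y] [Fintype Z] (p : X → Y → Z → ℝ) (x : X) (z : Z) : ℝ :=
  ∑ y, (pXY p x y / pX p x) * pZXY p x y z

/-- Probability `p(A_x)` of the block of the partition `α` containing `x`, where
`A : X → Finset X` sends each point to its block. -/
def pBlock [Fintype Y] [Fintype Z] (p : X → Y → Z → ℝ) (A : X → Finset X) (x : X) : ℝ :=
  ∑ x' ∈ A x, pX p x'

/-- The coarsened conditional `p̂(z|x) := ∑_{x' ∈ A_x} p(x'|A_x) p(z|x')`. -/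
noncomputable def pHat [Fintype Y] [Fintype Z] (p : X → Y → Z → ℝ) (A : X → Finset X)
    (x : X) (z : Z) : ℝ :=
  ∑ x' ∈ A x, (pX p x' / pBlock p A x) * pZX p x' z

/-! Write `D(f‖g) = ∑ f log (f/g)`. For a mixture `m = ∑ᵢ vᵢ kᵢ`, the compensation identity
`∑ᵢ vᵢ D(kᵢ‖q) = ∑ᵢ vᵢ D(kᵢ‖m) + D(m‖q)` has two nonnegative terms on the right, by Gibbs'
inequality. Dropping the first shows that `D(·‖q)` is convex; dropping the second shows that
`q = m` minimizes the left-hand side.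

On a block of the partition, `p̂(·|x)` is a mixture of the `p(·|x')`, and convexity with `q = p(z)`
gives `I(X→Z) ≤ I(X;Z)` after averaging over `x`. At a fixed `x`, `p(·|x)` is a mixture of the
`p(·|x,y)`, and minimality against the competitor `q = p̂(·|x)` gives `I(Y;Z|X) ≤ I(Y→Z|X)`. -/

section RelativeEntropy

variable {ι κ : Type*} {s : Finset ι} {v : ι → ℝ} {k : ι → κ → ℝ} {q : κ → ℝ}

/-- The mixture `∑ᵢ vᵢ kᵢ` of the vectors `kᵢ`. The weights `vᵢ` need not sum to `1`. -/
def mixture (s : Finset ι) (v : ι → ℝ) (k : ι → κ → ℝ) (j : κ) : ℝ := ∑ i ∈ s, v i * k i j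

lemma mixture_nonneg (hv : ∀ i ∈ s, 0 ≤ v i) (hk : ∀ i ∈ s, ∀ j, 0 ≤ k i j) (j : κ) :
    0 ≤ mixture s v k j :=
  Finset.sum_nonneg fun i hi => mul_nonneg (hv i hi) (hk i hi j)

lemma mixture_eq_zero_iff (hv : ∀ i ∈ s, 0 ≤ v i) (hk : ∀ i ∈ s, ∀ j, 0 ≤ k i j) {j : κ} :
    mixture s v k j = 0 ↔ ∀ i ∈ s, v i * k i j = 0 :=
  Finset.sum_eq_zero_iff_of_nonneg fun i hi => mul_nonneg (hv i hi) (hk i hi j)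

lemma sub_le_mul_log_div {a b : ℝ} (ha : 0 ≤ a) (hb : 0 ≤ b) (hab : b = 0 → a = 0) :
    a - b ≤ a * Real.log (a / b) := by
  rcases ha.eq_or_lt with rfl | ha
  · simpa using hb
  · have hb' : 0 < b := hb.lt_of_ne' fun h => ha.ne' (hab h)
    calc a - b = a * (1 - (a / b)⁻¹) := by field_simp
      _ ≤ a * Real.log (a / b) := by
        gcongr
        exact Real.one_sub_inv_le_log_of_pos (div_pos ha hb')

variable [Fintype κ]

lemma sum_mixture (s : Finset ι) (v : ι → ℝ) (k : ι → κ → ℝ) :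
    ∑ j, mixture s v k j = ∑ i ∈ s, v i * ∑ j, k i j := by
  simp only [mixture, Finset.mul_sum]
  exact Finset.sum_comm

/-- The relative entropy `D(f‖g)` of two nonnegative vectors, not required to be normalized. It is
the usual one when `f` vanishes wherever `g` does; elsewhere `log (r / 0) = 0` replaces the
value `∞`. -/
noncomputable def relEntropy (f g : κ → ℝ) : ℝ := ∑ j, f j * Real.log (f j / g j)

lemma sum_sub_sum_le_relEntropy {f g : κ → ℝ} (hf : ∀ j, 0 ≤ f j) (hg : ∀ j, 0 ≤ g j)
    (hfg : ∀ j, g j = 0 → f j = 0) : ∑ j, f j - ∑ j, g j ≤ relEntropy f g := by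
  rw [← Finset.sum_sub_distrib]
  exact Finset.sum_le_sum fun j _ => sub_le_mul_log_div (hf j) (hg j) (hfg j)

lemma sum_mul_relEntropy_eq_add_relEntropy_mixture (hv : ∀ i ∈ s, 0 ≤ v i)
    (hk : ∀ i ∈ s, ∀ j, 0 ≤ k i j) (hq : ∀ j, q j = 0 → mixture s v k j = 0) :
    ∑ i ∈ s, v i * relEntropy (k i) q =
      ∑ i ∈ s, v i * relEntropy (k i) (mixture s v k) + relEntropy (mixture s v k) q := by
  have hsplit : ∀ i ∈ s, ∀ j, v i * (k i j * Real.log (k i j / q j)) =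
      v i * (k i j * Real.log (k i j / mixture s v k j)) +
        v i * k i j * Real.log (mixture s v k j / q j) := by
    intro i hi j
    by_cases hvk : v i * k i j = 0
    · simp only [← mul_assoc, hvk, zero_mul, add_zero]
    · have hkj : k i j ≠ 0 := right_ne_zero_of_mul hvk
      have hmj : mixture s v k j ≠ 0 := fun h => hvk ((mixture_eq_zero_iff hv hk).1 h i hi)
      have hqj : q j ≠ 0 := mt (hq j) hmj
      rw [Real.log_div hkj hqj, Real.log_div hkj hmj, Real.log_div hmj hqj]
      ring
  have hmix : relEntropy (mixture s v k) q =
      ∑ i ∈ s, ∑ j, v i * k i j * Real.log (mixture s v k j / q j) := by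
    rw [Finset.sum_comm]
    exact Finset.sum_congr rfl fun j _ => Finset.sum_mul ..
  rw [hmix, ← Finset.sum_add_distrib]
  refine Finset.sum_congr rfl fun i hi => ?_
  simp only [relEntropy, Finset.mul_sum, ← Finset.sum_add_distrib, hsplit i hi]

lemma sum_mul_relEntropy_mixture_nonneg (hv : ∀ i ∈ s, 0 ≤ v i) (hv1 : ∑ i ∈ s, v i ≤ 1)
    (hk : ∀ i ∈ s, ∀ j, 0 ≤ k i j) :
    0 ≤ ∑ i ∈ s, v i * relEntropy (k i) (mixture s v k) := by
  have hgibbs : ∀ i ∈ s, v i * (∑ j, k i j - ∑ j, mixture s v k j) ≤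
      v i * relEntropy (k i) (mixture s v k) := by
    intro i hi
    rcases (hv i hi).eq_or_lt with hvi | hvi
    · simp only [← hvi, zero_mul, le_refl]
    · refine mul_le_mul_of_nonneg_left ?_ hvi.le
      refine sum_sub_sum_le_relEntropy (hk i hi) (mixture_nonneg hv hk) fun j hj => ?_
      exact (mul_eq_zero_iff_left hvi.ne').1 ((mixture_eq_zero_iff hv hk).1 hj i hi)
  calc 0 ≤ (1 - ∑ i ∈ s, v i) * ∑ j, mixture s v k j :=
        mul_nonneg (sub_nonneg.2 hv1) (Finset.sum_nonneg fun j _ => mixture_nonneg hv hk j)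
    _ = ∑ i ∈ s, v i * (∑ j, k i j - ∑ j, mixture s v k j) := by
        simp only [mul_sub, Finset.sum_sub_distrib, ← Finset.sum_mul, ← sum_mixture]
        ring
    _ ≤ _ := Finset.sum_le_sum hgibbs

lemma relEntropy_mixture_le (hv : ∀ i ∈ s, 0 ≤ v i) (hv1 : ∑ i ∈ s, v i ≤ 1)
    (hk : ∀ i ∈ s, ∀ j, 0 ≤ k i j) (hq : ∀ j, q j = 0 → mixture s v k j = 0) :
    relEntropy (mixture s v k) q ≤ ∑ i ∈ s, v i * relEntropy (k i) q := by
  rw [sum_mul_relEntropy_eq_add_relEntropy_mixture hv hk hq]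
  exact le_add_of_nonneg_left (sum_mul_relEntropy_mixture_nonneg hv hv1 hk)

lemma sum_mul_relEntropy_mixture_le (hv : ∀ i ∈ s, 0 ≤ v i) (hk : ∀ i ∈ s, ∀ j, 0 ≤ k i j)
    (hq0 : ∀ j, 0 ≤ q j) (hq : ∀ j, q j = 0 → mixture s v k j = 0)
    (hsum : ∑ j, q j ≤ ∑ j, mixture s v k j) :
    ∑ i ∈ s, v i * relEntropy (k i) (mixture s v k) ≤ ∑ i ∈ s, v i * relEntropy (k i) q := by
  rw [sum_mul_relEntropy_eq_add_relEntropy_mixture hv hk hq]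
  refine le_add_of_nonneg_right ((sub_nonneg.2 hsum).trans ?_)
  exact sum_sub_sum_le_relEntropy (mixture_nonneg hv hk) hq0 hq

end RelativeEntropy

section Partition

variable {A : X → Finset X} (hA_mem : ∀ x, x ∈ A x) (hA_part : ∀ x x', x' ∈ A x → A x' = A x)
include hA_mem hA_part

lemma mem_block_comm {x x' : X} : x' ∈ A x ↔ x ∈ A x' :=
  ⟨fun h => hA_part x x' h ▸ hA_mem x, fun h => hA_part x' x h ▸ hA_mem x'⟩

lemma sum_mul_block_average {K : Type*} [Field K] [LinearOrder K] [IsStrictOrderedRing K]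
    [Fintype X] {w : X → K} (hw : ∀ x, 0 ≤ w x) (f : X → K) :
    ∑ x, w x * ∑ x' ∈ A x, w x' / (∑ u ∈ A x, w u) * f x' = ∑ x, w x * f x := by
  simp only [Finset.mul_sum]
  rw [Finset.sum_comm' (t' := Finset.univ) (s' := A)
    (by simpa using fun x x' => mem_block_comm hA_mem hA_part)]
  refine Finset.sum_congr rfl fun x' _ => ?_
  have hblock : ∑ u ∈ A x', w u = 0 → w x' = 0 := fun h =>
    (Finset.sum_eq_zero_iff_of_nonneg fun u _ => hw u).1 h x' (hA_mem x')
  calc ∑ x ∈ A x', w x * (w x' / (∑ u ∈ A x, w u) * f x')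
      = ∑ x ∈ A x', w x * (w x' / (∑ u ∈ A x', w u) * f x') :=
        Finset.sum_congr rfl fun x hx => by rw [hA_part x' x hx]
    _ = w x' / (∑ u ∈ A x', w u) * (∑ u ∈ A x', w u) * f x' := by
        rw [← Finset.sum_mul]
        ring
    _ = w x' * f x' := by rw [div_mul_cancel_of_imp hblock]

end Partition

section InformationFlow

variable [Fintype Z]

lemma pXY_nonneg {p : X → Y → Z → ℝ} (hp : ∀ x y z, 0 ≤ p x y z) (x : X) (y : Y) :
    0 ≤ pXY p x y :=
  Finset.sum_nonneg fun z _ => hp x y z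

lemma pZXY_nonneg {p : X → Y → Z → ℝ} (hp : ∀ x y z, 0 ≤ p x y z) (x : X) (y : Y) (z : Z) :
    0 ≤ pZXY p x y z :=
  div_nonneg (hp x y z) (pXY_nonneg hp x y)

variable [Fintype Y]

/-- The mutual information `I(X;Z)`. Here and in the three quantities below, a conditional that
is undefined because its condition has probability `0` enters only with weight `0`. -/
noncomputable def mutualInfo [Fintype X] (p : X → Y → Z → ℝ) : ℝ :=
  ∑ x, pX p x * relEntropy (pZX p x) (pZ p)

/-- The conditional mutual information `I(Y;Z|X)`. -/
noncomputable def condMutualInfo [Fintype X] (p : X → Y → Z → ℝ) : ℝ :=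
  ∑ x, ∑ y, pXY p x y * relEntropy (pZXY p x y) (pZX p x)

/-- The causal information flow `I(X→Z)`, for the partition with blocks `A x`. -/
noncomputable def infoFlow [Fintype X] (p : X → Y → Z → ℝ) (A : X → Finset X) : ℝ :=
  ∑ x, pX p x * relEntropy (pHat p A x) (pZ p)

/-- The conditional causal information flow `I(Y→Z|X)`, for the partition with blocks `A x`. -/
noncomputable def condInfoFlow [Fintype X] (p : X → Y → Z → ℝ) (A : X → Finset X) : ℝ :=
  ∑ x, ∑ y, pXY p x y * relEntropy (pZXY p x y) (pHat p A x)

lemma pZX_eq_mixture (p : X → Y → Z → ℝ) (x : X) :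
    pZX p x = mixture Finset.univ (fun y => pXY p x y / pX p x) (pZXY p x) := rfl

lemma pHat_eq_mixture (p : X → Y → Z → ℝ) (A : X → Finset X) (x : X) :
    pHat p A x = mixture (A x) (fun x' => pX p x' / pBlock p A x) (pZX p) := rfl

section

variable {p : X → Y → Z → ℝ} (hp : ∀ x y z, 0 ≤ p x y z)
include hp

lemma pX_nonneg (x : X) : 0 ≤ pX p x := Finset.sum_nonneg fun y _ => pXY_nonneg hp x y

lemma pBlock_nonneg (A : X → Finset X) (x : X) : 0 ≤ pBlock p A x :=
  Finset.sum_nonneg fun x' _ => pX_nonneg hp x'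

lemma pXY_div_pX_nonneg (x : X) (y : Y) : 0 ≤ pXY p x y / pX p x :=
  div_nonneg (pXY_nonneg hp x y) (pX_nonneg hp x)

lemma pX_div_pBlock_nonneg (A : X → Finset X) (x x' : X) : 0 ≤ pX p x' / pBlock p A x :=
  div_nonneg (pX_nonneg hp x') (pBlock_nonneg hp A x)

lemma pZX_nonneg (x : X) (z : Z) : 0 ≤ pZX p x z :=
  mixture_nonneg (fun y _ => pXY_div_pX_nonneg hp x y) (fun y _ => pZXY_nonneg hp x y) z

lemma pHat_nonneg (A : X → Finset X) (x : X) (z : Z) : 0 ≤ pHat p A x z :=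
  mixture_nonneg (fun x' _ => pX_div_pBlock_nonneg hp A x x') (fun x' _ => pZX_nonneg hp x') z

lemma sum_pXY_mul (x : X) (f : Y → ℝ) :
    ∑ y, pXY p x y * f y = pX p x * ∑ y, pXY p x y / pX p x * f y := by
  have hzero (y : Y) (h : pX p x = 0) : pXY p x y = 0 :=
    (Finset.sum_eq_zero_iff_of_nonneg fun y _ => pXY_nonneg hp x y).1 h y (Finset.mem_univ y)
  rw [Finset.mul_sum]
  refine Finset.sum_congr rfl fun y _ => ?_
  rw [← mul_assoc, mul_div_cancel_of_imp' (hzero y)]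

lemma pX_mul_sum_pZX (x : X) : pX p x * ∑ z, pZX p x z = pX p x := by
  have hnorm (y : Y) : pXY p x y * ∑ z, pZXY p x y z = pXY p x y := by
    simp only [pZXY, ← Finset.sum_div]
    exact mul_div_cancel_of_imp' id
  rw [pZX_eq_mixture, sum_mixture, ← sum_pXY_mul hp]
  exact Finset.sum_congr rfl fun y _ => hnorm y

lemma sum_pHat_le_one (A : X → Finset X) (x : X) : ∑ z, pHat p A x z ≤ 1 := by
  rw [pHat_eq_mixture, sum_mixture]
  simp only [div_mul_eq_mul_div, pX_mul_sum_pZX hp, ← Finset.sum_div]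
  exact div_self_le_one _

lemma pHat_eq_zero_of_pZ_eq_zero [Fintype X] (A : X → Finset X) (x : X) {z : Z}
    (hz : pZ p z = 0) : pHat p A x z = 0 := by
  have hpz (x : X) (y : Y) : p x y z = 0 := by
    have hx := (Finset.sum_eq_zero_iff_of_nonneg fun x _ =>
      Finset.sum_nonneg fun y _ => hp x y z).1 hz x (Finset.mem_univ x)
    exact (Finset.sum_eq_zero_iff_of_nonneg fun y _ => hp x y z).1 hx y (Finset.mem_univ y)
  simp only [pHat, pZX, pZXY, hpz, zero_div, mul_zero, Finset.sum_const_zero]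

lemma pZX_eq_zero_of_pHat_eq_zero {A : X → Finset X} {x : X} (hA_mem : x ∈ A x)
    (hx : 0 < pX p x) {z : Z} (hz : pHat p A x z = 0) : pZX p x z = 0 := by
  have hblock : 0 < pBlock p A x :=
    hx.trans_le (Finset.single_le_sum (fun x' _ => pX_nonneg hp x') hA_mem)
  have hterm : pX p x / pBlock p A x * pZX p x z = 0 :=
    (mixture_eq_zero_iff (fun x' _ => pX_div_pBlock_nonneg hp A x x')
      (fun x' _ => pZX_nonneg hp x')).1 hz x hA_mem
  exact (mul_eq_zero_iff_left (div_pos hx hblock).ne').1 hterm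

theorem infoFlow_le_mutualInfo [Fintype X] {A : X → Finset X} (hA_mem : ∀ x, x ∈ A x)
    (hA_part : ∀ x x', x' ∈ A x → A x' = A x) : infoFlow p A ≤ mutualInfo p := by
  have hconvex (x : X) : relEntropy (pHat p A x) (pZ p) ≤
      ∑ x' ∈ A x, pX p x' / pBlock p A x * relEntropy (pZX p x') (pZ p) := by
    refine relEntropy_mixture_le (fun x' _ => pX_div_pBlock_nonneg hp A x x') ?_
      (fun x' _ => pZX_nonneg hp x') fun z hz => pHat_eq_zero_of_pZ_eq_zero hp A x hz
    rw [← Finset.sum_div]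
    exact div_self_le_one _
  calc infoFlow p A
      ≤ ∑ x, pX p x * ∑ x' ∈ A x, pX p x' / pBlock p A x * relEntropy (pZX p x') (pZ p) :=
        Finset.sum_le_sum fun x _ => mul_le_mul_of_nonneg_left (hconvex x) (pX_nonneg hp x)
    _ = mutualInfo p := sum_mul_block_average hA_mem hA_part (pX_nonneg hp) _

theorem condMutualInfo_le_condInfoFlow [Fintype X] {A : X → Finset X} (hA_mem : ∀ x, x ∈ A x) :
    condMutualInfo p ≤ condInfoFlow p A := by
  refine Finset.sum_le_sum fun x _ => ?_
  rw [sum_pXY_mul hp, sum_pXY_mul hp]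
  rcases (pX_nonneg hp x).eq_or_lt with hx | hx
  · simp only [← hx, zero_mul, le_refl]
  · have hsum : ∑ z, pHat p A x z ≤ ∑ z, pZX p x z :=
      (sum_pHat_le_one hp A x).trans_eq ((mul_eq_left₀ hx.ne').1 (pX_mul_sum_pZX hp x)).symm
    refine mul_le_mul_of_nonneg_left ?_ hx.le
    exact sum_mul_relEntropy_mixture_le (fun y _ => pXY_div_pX_nonneg hp x y)
      (fun y _ => pZXY_nonneg hp x y) (pHat_nonneg hp A x)
      (fun z hz => pZX_eq_zero_of_pHat_eq_zero hp (hA_mem x) hx hz) hsum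

end

theorem causal_information_flow_comparison_general [Fintype X] (p : X → Y → Z → ℝ)
    (hp : ∀ x y z, 0 ≤ p x y z) (A : X → Finset X) (hA_mem : ∀ x, x ∈ A x)
    (hA_part : ∀ x x', x' ∈ A x → A x' = A x) :
    infoFlow p A ≤ mutualInfo p ∧ condMutualInfo p ≤ condInfoFlow p A :=
  ⟨infoFlow_le_mutualInfo hp hA_mem hA_part, condMutualInfo_le_condInfoFlow hp hA_mem⟩

end InformationFlow

/-- Comparison of the causal information flows with the classical (conditional) mutual
information in the finite two-input case:
`I(X→Z) = ∑_x p(x) ∑_z p̂(z|x) log(p̂(z|x)/p(z)) ≤ I(X;Z) = ∑_x p(x) ∑_z p(z|x) log(p(z|x)/p(z))`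
and
`I(Y→Z|X) = ∑_{x,y} p(x,y) ∑_z p(z|x,y) log(p(z|x,y)/p̂(z|x))
  ≥ I(Y;Z|X) = ∑_{x,y} p(x,y) ∑_z p(z|x,y) log(p(z|x,y)/p(z|x))`
(with the convention `0 · log 0 = 0`; in Lean `log 0 = 0` and `r / 0 = 0`). -/
theorem causal_information_flow_comparison
    [Fintype X] [Fintype Y] [Fintype Z] [DecidableEq X]
    (p : X → Y → Z → ℝ)
    (hp0 : ∀ x y z, 0 ≤ p x y z)
    (hp1 : ∑ x, ∑ y, ∑ z, p x y z = 1)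
    (A : X → Finset X)
    (hA_mem : ∀ x, x ∈ A x)
    (hA_part : ∀ x x', x' ∈ A x → A x' = A x)
    (hpz : ∀ z, 0 < pZ p z)
    (hpx : ∀ x, 0 < pX p x)
    (hpxy : ∀ x y, 0 < pXY p x y)
    (hpA : ∀ x, 0 < pBlock p A x) :
    ((∑ x, pX p x * ∑ z, pHat p A x z * Real.log (pHat p A x z / pZ p z))
        ≤ ∑ x, pX p x * ∑ z, pZX p x z * Real.log (pZX p x z / pZ p z))
    ∧ ((∑ x, ∑ y, pXY p x y *
            ∑ z, pZXY p x y z * Real.log (pZXY p x y z / pHat p A x z))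
        ≥ ∑ x, ∑ y, pXY p x y *
            ∑ z, pZXY p x y z * Real.log (pZXY p x y z / pZX p x z)) :=
  causal_information_flow_comparison_general p hp0 A hA_mem hA_part
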